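/- There is an absolute constant C > 0 such that the following holds. Let G be a d-regular simple graph on a finite vertex set V with |V| = n ≥ 2, let φ ∈ (0,1) and η ≥ 1 be reals, and suppose V is partitioned into nonempty clusters C_1, …, C_k such that φ_in(C_i) ≥ φ and |C_i| ≥ n/(η·k) for every i ∈ {1,…,k}. Let M := (1/2)·I + (1/(2d))·A be the lazy random walk matrix of G. Then for every integer t ≥ 10·(log n)/φ² and every vertex x ∈ V, ‖M^t 𝟙_x‖₂ ≤ C·√(η·k/n). -/

import Mathlib

open Finset

/-- `edgeCount G S T` is the number of edges of `G` with one endpoint in `S` and the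
other in `T` (for disjoint `S`, `T` this counts each such edge exactly once). -/
def edgeCount {V : Type} [Fintype V] [DecidableEq V] (G : SimpleGraph V)
    [DecidableRel G.Adj] (S T : Finset V) : ℕ :=
  ∑ x ∈ S, ∑ y ∈ T, if G.Adj x y then 1 else 0

/-- The adjacency weight. -/
noncomputable def wt {V : Type} (G : SimpleGraph V) [DecidableRel G.Adj] (u v : V) : ℝ :=
  if G.Adj u v then 1 else 0

lemma wt_nonneg {V : Type} (G : SimpleGraph V) [DecidableRel G.Adj] (u v : V) :
    0 ≤ wt G u v := by
  unfold wt; split_ifs <;> norm_num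

lemma wt_comm {V : Type} (G : SimpleGraph V) [DecidableRel G.Adj] (u v : V) :
    wt G u v = wt G v u := by
  unfold wt; simp [G.adj_comm]

lemma wt_sum {V : Type} [Fintype V] [DecidableEq V] (G : SimpleGraph V) [DecidableRel G.Adj]
    (d : ℕ) (hd : G.IsRegularOfDegree d) (u : V) : ∑ v, wt G u v = d := by
  unfold wt
  rw [Finset.sum_boole, ← hd u, ← G.card_neighborFinset_eq_degree, G.neighborFinset_eq_filter]

lemma edgeCount_eq {V : Type} [Fintype V] [DecidableEq V] (G : SimpleGraph V)
    [DecidableRel G.Adj] (C S : Finset V) (hS : S ⊆ C) :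
    (edgeCount G S (C \ S) : ℝ) =
      ∑ u ∈ C, ∑ v ∈ C, wt G u v * (if u ∈ S ∧ v ∉ S then 1 else 0) := by
  unfold edgeCount
  push_cast
  rw [← Finset.sum_subset hS]
  · refine Finset.sum_congr rfl fun u hu => ?_
    rw [← Finset.sum_subset (Finset.sdiff_subset : C \ S ⊆ C)]
    · refine Finset.sum_congr rfl fun v hv => ?_
      rw [Finset.mem_sdiff] at hv
      simp [wt, hu, hv.2]
    · intro v hv hv'
      have : v ∈ S := by
        by_contra h
        exact hv' (Finset.mem_sdiff.2 ⟨hv, h⟩)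
      simp [this]
  · intro u _ hu
    simp [hu]

lemma coarea {V : Type} [Fintype V] [DecidableEq V] (G : SimpleGraph V) [DecidableRel G.Adj]
    (d : ℕ) (φ : ℝ) (C : Finset V)
    (hC : ∀ S ⊆ C, 0 < S.card → (S.card : ℝ) ≤ (C.card : ℝ) / 2 →
        φ * (d * S.card) ≤ (edgeCount G S (C \ S) : ℝ)) :
    ∀ (N : ℕ) (w : V → ℝ), (∀ u, 0 ≤ w u) → (C.filter (fun u => w u ≠ 0)).card = N →
      ((C.filter (fun u => w u ≠ 0)).card : ℝ) ≤ (C.card : ℝ) / 2 →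
      2 * φ * d * ∑ u ∈ C, w u ≤ ∑ u ∈ C, ∑ v ∈ C, wt G u v * |w u - w v| := by
  intro N
  induction N using Nat.strong_induction_on with
  | _ N ih =>
  intro w hw hN hhalf
  set S := C.filter (fun u => w u ≠ 0) with hSdef
  rcases S.eq_empty_or_nonempty with hS | hS
  · have h0 : ∀ u ∈ C, w u = 0 := by
      intro u hu
      by_contra h
      have : u ∈ S := Finset.mem_filter.2 ⟨hu, h⟩
      simp [hS] at this
    rw [Finset.sum_eq_zero h0]
    rw [mul_zero]
    exact Finset.sum_nonneg fun u _ => Finset.sum_nonneg fun v _ =>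
      mul_nonneg (wt_nonneg G u v) (abs_nonneg _)
  · obtain ⟨z, hz, hmin⟩ := S.exists_min_image w hS
    set m := w z with hm
    have hSC : S ⊆ C := Finset.filter_subset _ _
    let w' : V → ℝ := fun u => if u ∈ S then w u - m else w u
    have hw' : ∀ u, 0 ≤ w' u := by
      intro u
      by_cases h : u ∈ S
      · simp only [w', h, if_true]; linarith [hmin u h]
      · simp only [w', h, if_false]; exact hw u
    have hsub : C.filter (fun u => w' u ≠ 0) ⊂ S := by
      refine Finset.ssubset_iff_subset_ne.2 ⟨?_, ?_⟩
      · intro u hu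
        rw [Finset.mem_filter] at hu
        by_contra h
        have h2 : w u ≠ 0 := by simpa [w', h] using hu.2
        exact h (Finset.mem_filter.2 ⟨hu.1, h2⟩)
      · intro h
        rw [← h, Finset.mem_filter] at hz
        apply hz.2
        have : z ∈ S := by rw [← h]; exact Finset.mem_filter.2 hz
        simp [w', this, hm]
    have hlt := Finset.card_lt_card hsub
    have hlt' : ((C.filter (fun u => w' u ≠ 0)).card : ℝ) ≤ S.card := by exact_mod_cast hlt.le
    have hi := ih _ (hN ▸ hlt) w' hw' rfl (hlt'.trans hhalf)
    have hcond := hC S hSC hS.card_pos hhalf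
    have hm0 : 0 ≤ m := hw z
    have hpt : ∀ u ∈ C, ∀ v ∈ C, wt G u v * |w u - w v| = wt G u v * |w' u - w' v| +
        m * (wt G u v * (if u ∈ S ∧ v ∉ S then 1 else 0)) +
        m * (wt G v u * (if v ∈ S ∧ u ∉ S then 1 else 0)) := by
      intro u hu v hv
      rw [wt_comm G v u]
      have key : |w u - w v| = |w' u - w' v| + m * (if u ∈ S ∧ v ∉ S then 1 else 0)
          + m * (if v ∈ S ∧ u ∉ S then 1 else 0) := by
        have hz0 : ∀ y ∈ C, y ∉ S → w y = 0 := by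
          intro y hy hyS
          by_contra h
          exact hyS (Finset.mem_filter.2 ⟨hy, h⟩)
        by_cases h1 : u ∈ S <;> by_cases h2 : v ∈ S
        · simp [w', h1, h2]
        · have := hmin u h1
          simp only [w', h1, h2, hz0 v hv h2, if_true, if_false, not_true, not_false_iff, and_true,
            and_false, sub_zero, false_and]
          rw [abs_of_nonneg (hw u), abs_of_nonneg (by linarith)]; simp
        · have := hmin v h2
          simp only [w', h1, h2, hz0 u hu h1, if_true, if_false, not_true, not_false_iff, and_true,
            and_false, zero_sub, false_and, abs_neg]
          rw [abs_of_nonneg (hw v), abs_of_nonneg (by linarith)]; simp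
        · simp [w', h1, h2]
      rw [key]; ring
    have hsum : ∑ u ∈ C, ∑ v ∈ C, wt G u v * |w u - w v| =
        ∑ u ∈ C, ∑ v ∈ C, wt G u v * |w' u - w' v| + 2 * m * edgeCount G S (C \ S) := by
      rw [Finset.sum_congr rfl fun u hu => Finset.sum_congr rfl fun v hv => hpt u hu v hv]
      simp only [Finset.sum_add_distrib, ← Finset.mul_sum]
      rw [Finset.sum_comm (f := fun u v => wt G v u * (if v ∈ S ∧ u ∉ S then (1:ℝ) else 0)),
        ← edgeCount_eq G C S hSC]
      ring
    have hws : ∑ u ∈ C, w u = ∑ u ∈ C, w' u + m * S.card := by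
      have : ∀ u ∈ C, w u = w' u + (if u ∈ S then m else 0) := by
        intro u _
        by_cases h : u ∈ S <;> simp [w', h]
      rw [Finset.sum_congr rfl this, Finset.sum_add_distrib, ← Finset.sum_filter,
        Finset.filter_mem_eq_inter, Finset.inter_eq_right.2 hSC]
      simp [mul_comm]
    rw [hsum, hws]
    nlinarith [mul_le_mul_of_nonneg_left hcond hm0]

lemma cheeger_half {V : Type} [Fintype V] [DecidableEq V] (G : SimpleGraph V) [DecidableRel G.Adj]
    (d : ℕ) (hd : G.IsRegularOfDegree d) (φ : ℝ) (hφ : 0 < φ) (C : Finset V)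
    (hC : ∀ S ⊆ C, 0 < S.card → (S.card : ℝ) ≤ (C.card : ℝ) / 2 →
        φ * (d * S.card) ≤ (edgeCount G S (C \ S) : ℝ))
    (g : V → ℝ) (hg : ∀ u, 0 ≤ g u)
    (hh : ((C.filter (fun u => g u ≠ 0)).card : ℝ) ≤ (C.card : ℝ) / 2) :
    φ ^ 2 * d * ∑ u ∈ C, g u ^ 2 ≤ ∑ u ∈ C, ∑ v ∈ C, wt G u v * (g u - g v) ^ 2 := by
  have h1 := coarea G d φ C hC _ (fun u => g u ^ 2) (fun u => sq_nonneg _) rfl (by simpa using hh)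
  have hpt : ∀ u v, wt G u v * |g u ^ 2 - g v ^ 2| ≤ φ⁻¹ * (wt G u v * (g u - g v) ^ 2) +
      φ / 2 * (wt G u v * g u ^ 2) + φ / 2 * (wt G v u * g v ^ 2) := by
    intro u v
    rw [wt_comm G v u]
    have : |g u ^ 2 - g v ^ 2| ≤ φ⁻¹ * (g u - g v) ^ 2 + φ / 2 * g u ^ 2 + φ / 2 * g v ^ 2 := by
      have e : |g u ^ 2 - g v ^ 2| = |g u - g v| * (g u + g v) := by
        rw [sq_sub_sq, abs_mul, abs_of_nonneg (add_nonneg (hg u) (hg v)), mul_comm]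
      rw [e]
      have hs : (g u - g v) ^ 2 = |g u - g v| ^ 2 := (sq_abs _).symm
      have h2 : |g u - g v| * (g u + g v) ≤ φ⁻¹ * |g u - g v| ^ 2 + φ / 4 * (g u + g v) ^ 2 := by
        have h3 : φ⁻¹ * |g u - g v| ^ 2 + φ / 4 * (g u + g v) ^ 2 - |g u - g v| * (g u + g v)
          = φ⁻¹ * (|g u - g v| - φ / 2 * (g u + g v)) ^ 2 := by
          field_simp; ring
        have h4 : 0 ≤ φ⁻¹ * (|g u - g v| - φ / 2 * (g u + g v)) ^ 2 := by positivity
        linarith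
      rw [hs]
      nlinarith [mul_nonneg hφ.le (sq_nonneg (g u - g v))]
    nlinarith [mul_le_mul_of_nonneg_left this (wt_nonneg G u v)]
  have h2 : ∑ u ∈ C, ∑ v ∈ C, wt G u v * |g u ^ 2 - g v ^ 2| ≤
      φ⁻¹ * (∑ u ∈ C, ∑ v ∈ C, wt G u v * (g u - g v) ^ 2) +
      φ / 2 * (∑ u ∈ C, ∑ v ∈ C, wt G u v * g u ^ 2) +
      φ / 2 * (∑ u ∈ C, ∑ v ∈ C, wt G u v * g u ^ 2) := by
    refine (Finset.sum_le_sum fun u _ => Finset.sum_le_sum fun v _ => hpt u v).trans ?_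
    simp only [Finset.sum_add_distrib, ← Finset.mul_sum]
    rw [Finset.sum_comm (f := fun u v => wt G v u * g v ^ 2)]
  have h3 : ∑ u ∈ C, ∑ v ∈ C, wt G u v * g u ^ 2 ≤ d * ∑ u ∈ C, g u ^ 2 := by
    rw [Finset.mul_sum]
    refine Finset.sum_le_sum fun u _ => ?_
    rw [← Finset.sum_mul, ← wt_sum G d hd u]
    refine mul_le_mul_of_nonneg_right ?_ (sq_nonneg _)
    exact Finset.sum_le_sum_of_subset_of_nonneg (Finset.subset_univ _) fun v _ _ => wt_nonneg G u v
  set D := ∑ u ∈ C, ∑ v ∈ C, wt G u v * (g u - g v) ^ 2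
  set Q := ∑ u ∈ C, g u ^ 2
  have h4 : φ * d * Q ≤ φ⁻¹ * D := by
    nlinarith [mul_le_mul_of_nonneg_left h3 hφ.le]
  have h5 := mul_le_mul_of_nonneg_left h4 hφ.le
  rw [← mul_assoc φ φ⁻¹, mul_inv_cancel₀ hφ.ne'] at h5
  linarith

lemma exists_median {V : Type} (C : Finset V) (hne : C.Nonempty) (f : V → ℝ) :
    ∃ c : ℝ, ((C.filter (fun u => c < f u)).card : ℝ) ≤ (C.card : ℝ) / 2 ∧
      ((C.filter (fun u => f u < c)).card : ℝ) ≤ (C.card : ℝ) / 2 := by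
  classical
  let T := C.filter (fun u => ((C.filter (fun v => f u < f v)).card : ℝ) ≤ (C.card : ℝ) / 2)
  have hT : T.Nonempty := by
    obtain ⟨z, hz, hmax⟩ := C.exists_max_image f hne
    refine ⟨z, Finset.mem_filter.2 ⟨hz, ?_⟩⟩
    rw [Finset.filter_false_of_mem]
    · simp; positivity
    · intro v hv; exact not_lt.2 (hmax v hv)
  obtain ⟨z, hz, hmin⟩ := T.exists_min_image f hT
  refine ⟨f z, (Finset.mem_filter.1 hz).2, ?_⟩
  by_contra hcon
  push Not at hcon
  have hne2 : (C.filter (fun u => f u < f z)).Nonempty := by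
    rw [← Finset.card_pos]
    have : (0:ℝ) < ((C.filter (fun u => f u < f z)).card : ℝ) := lt_of_le_of_lt (by positivity) hcon
    exact_mod_cast this
  obtain ⟨y, hy, hmax⟩ := (C.filter (fun u => f u < f z)).exists_max_image f hne2
  rw [Finset.mem_filter] at hy
  have hyT : y ∈ T := by
    refine Finset.mem_filter.2 ⟨hy.1, ?_⟩
    have h1 : C.filter (fun v => f y < f v) ⊆ C.filter (fun v => ¬ f v < f z) := by
      intro v hv
      rw [Finset.mem_filter] at hv ⊢
      refine ⟨hv.1, fun h => ?_⟩
      have := hmax v (Finset.mem_filter.2 ⟨hv.1, h⟩)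
      linarith [hv.2]
    have h2 := Finset.card_le_card h1
    have h3 := Finset.card_filter_add_card_filter_not (s := C) (fun v => f v < f z)
    have h2' : ((C.filter (fun v => f y < f v)).card : ℝ) ≤
      ((C.filter (fun v => ¬ f v < f z)).card : ℝ) := by exact_mod_cast h2
    have h3' : ((C.filter (fun v => f v < f z)).card : ℝ) +
      ((C.filter (fun v => ¬ f v < f z)).card : ℝ) = C.card := by exact_mod_cast h3
    linarith
  linarith [hmin y hyT, hy.2]

lemma cheeger {V : Type} [Fintype V] [DecidableEq V] (G : SimpleGraph V) [DecidableRel G.Adj]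
    (d : ℕ) (hd : G.IsRegularOfDegree d) (φ : ℝ) (hφ : 0 < φ) (C : Finset V) (hne : C.Nonempty)
    (hC : ∀ S ⊆ C, 0 < S.card → (S.card : ℝ) ≤ (C.card : ℝ) / 2 →
        φ * (d * S.card) ≤ (edgeCount G S (C \ S) : ℝ))
    (f : V → ℝ) :
    φ ^ 2 * d * (∑ u ∈ C, f u ^ 2 - (∑ u ∈ C, f u) ^ 2 / C.card) ≤
      ∑ u ∈ C, ∑ v ∈ C, wt G u v * (f u - f v) ^ 2 := by
  obtain ⟨c, hc1, hc2⟩ := exists_median C hne f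
  have hg := cheeger_half G d hd φ hφ C hC (fun u => max (f u - c) 0) (fun u => le_max_right _ _)
    (by
      refine le_trans ?_ hc1
      refine Nat.cast_le.2 (Finset.card_le_card ?_)
      intro u hu
      rw [Finset.mem_filter] at hu ⊢
      refine ⟨hu.1, ?_⟩
      by_contra h
      exact hu.2 (max_eq_right (by linarith)))
  have hh := cheeger_half G d hd φ hφ C hC (fun u => max (c - f u) 0) (fun u => le_max_right _ _)
    (by
      refine le_trans ?_ hc2
      refine Nat.cast_le.2 (Finset.card_le_card ?_)
      intro u hu
      rw [Finset.mem_filter] at hu ⊢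
      refine ⟨hu.1, ?_⟩
      by_contra h
      exact hu.2 (max_eq_right (by linarith)))
  have hD : ∑ u ∈ C, ∑ v ∈ C, wt G u v * (max (f u - c) 0 - max (f v - c) 0) ^ 2 +
      ∑ u ∈ C, ∑ v ∈ C, wt G u v * (max (c - f u) 0 - max (c - f v) 0) ^ 2 ≤
      ∑ u ∈ C, ∑ v ∈ C, wt G u v * (f u - f v) ^ 2 := by
    simp only [← Finset.sum_add_distrib]
    refine Finset.sum_le_sum fun u _ => Finset.sum_le_sum fun v _ => ?_
    rw [← mul_add]
    refine mul_le_mul_of_nonneg_left ?_ (wt_nonneg G u v)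
    rcases le_total (f u) c with h1 | h1 <;> rcases le_total (f v) c with h2 | h2
    · rw [max_eq_right (by linarith : f u - c ≤ 0), max_eq_right (by linarith : f v - c ≤ 0),
        max_eq_left (by linarith : 0 ≤ c - f u), max_eq_left (by linarith : 0 ≤ c - f v)]
      nlinarith
    · rw [max_eq_right (by linarith : f u - c ≤ 0), max_eq_left (by linarith : 0 ≤ f v - c),
        max_eq_left (by linarith : 0 ≤ c - f u), max_eq_right (by linarith : c - f v ≤ 0)]
      nlinarith [mul_nonneg (sub_nonneg.2 h1) (sub_nonneg.2 h2)]
    · rw [max_eq_left (by linarith : 0 ≤ f u - c), max_eq_right (by linarith : f v - c ≤ 0),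
        max_eq_right (by linarith : c - f u ≤ 0), max_eq_left (by linarith : 0 ≤ c - f v)]
      nlinarith [mul_nonneg (sub_nonneg.2 h1) (sub_nonneg.2 h2)]
    · rw [max_eq_left (by linarith : 0 ≤ f u - c), max_eq_left (by linarith : 0 ≤ f v - c),
        max_eq_right (by linarith : c - f u ≤ 0), max_eq_right (by linarith : c - f v ≤ 0)]
      nlinarith
  have hQ : ∑ u ∈ C, (max (f u - c) 0) ^ 2 + ∑ u ∈ C, (max (c - f u) 0) ^ 2 =
      ∑ u ∈ C, (f u - c) ^ 2 := by
    rw [← Finset.sum_add_distrib]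
    refine Finset.sum_congr rfl fun u _ => ?_
    rcases le_total (f u) c with h1 | h1
    · rw [max_eq_right (by linarith : f u - c ≤ 0), max_eq_left (by linarith : 0 ≤ c - f u)]; ring
    · rw [max_eq_left (by linarith : 0 ≤ f u - c), max_eq_right (by linarith : c - f u ≤ 0)]; ring
  have hcard : (0:ℝ) < C.card := by exact_mod_cast hne.card_pos
  have hV : ∑ u ∈ C, f u ^ 2 - (∑ u ∈ C, f u) ^ 2 / C.card ≤ ∑ u ∈ C, (f u - c) ^ 2 := by
    have e : ∑ u ∈ C, (f u - c) ^ 2 = ∑ u ∈ C, f u ^ 2 - 2 * c * ∑ u ∈ C, f u + C.card * c ^ 2 := by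
      rw [Finset.mul_sum, ← Finset.sum_sub_distrib, ← nsmul_eq_mul, ← Finset.sum_const,
        ← Finset.sum_add_distrib]
      refine Finset.sum_congr rfl fun u _ => by ring
    rw [e]
    set s := ∑ u ∈ C, f u
    have : s ^ 2 / C.card - 2 * c * s + C.card * c ^ 2 = (s - C.card * c) ^ 2 / C.card := by
      field_simp; ring
    have h0 : 0 ≤ (s - C.card * c) ^ 2 / C.card := by positivity
    linarith
  have := mul_le_mul_of_nonneg_left hV (by positivity : 0 ≤ φ ^ 2 * (d:ℝ))
  rw [← hQ] at this
  linarith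

lemma mulVec_formula {V : Type} [Fintype V] [DecidableEq V] (G : SimpleGraph V) [DecidableRel G.Adj]
    (d : ℕ) (p : V → ℝ) (u : V) :
    Matrix.mulVec ((1/2 : ℝ) • (1 : Matrix V V ℝ) + (1/(2 * (d:ℝ))) • G.adjMatrix ℝ) p u =
      p u / 2 + (1 / (2 * (d:ℝ))) * ∑ v, wt G u v * p v := by
  rw [Matrix.add_mulVec, Matrix.smul_mulVec, Matrix.smul_mulVec, Matrix.one_mulVec]
  simp [Matrix.mulVec, dotProduct, SimpleGraph.adjMatrix_apply, wt]
  ring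

lemma energy {V : Type} [Fintype V] [DecidableEq V] (G : SimpleGraph V) [DecidableRel G.Adj]
    (d : ℕ) (hd1 : 1 ≤ d) (hd : G.IsRegularOfDegree d) (p : V → ℝ) :
    ∑ u, (p u / 2 + (1 / (2 * (d:ℝ))) * ∑ v, wt G u v * p v) ^ 2 ≤
      ∑ u, p u ^ 2 - 1 / (4 * d) * ∑ u, ∑ v, wt G u v * (p u - p v) ^ 2 := by
  have hdp : (0:ℝ) < d := by exact_mod_cast hd1
  have h1 : ∀ u, (p u / 2 + (1 / (2 * (d:ℝ))) * ∑ v, wt G u v * p v) ^ 2 ≤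
      1 / (4 * d) * ∑ v, wt G u v * (p u + p v) ^ 2 := by
    intro u
    have cs := Finset.sum_mul_sq_le_sq_mul_sq Finset.univ (fun v => wt G u v)
      (fun v => wt G u v * (p u + p v))
    have hw2 : ∀ v, wt G u v ^ 2 = wt G u v := by
      intro v; unfold wt; split_ifs <;> norm_num
    have e1 : ∀ v, wt G u v * (wt G u v * (p u + p v)) = wt G u v * p u + wt G u v * p v := by
      intro v; rw [← mul_assoc, ← sq, hw2]; ring
    simp only [mul_pow, hw2, e1] at cs
    rw [Finset.sum_add_distrib, ← Finset.sum_mul, wt_sum G d hd] at cs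
    have e2 : p u / 2 + (1 / (2 * (d:ℝ))) * ∑ v, wt G u v * p v =
      (d * p u + ∑ v, wt G u v * p v) / (2 * d) := by field_simp
    rw [e2, div_pow, div_le_iff₀ (by positivity)]
    refine cs.trans (le_of_eq ?_)
    field_simp; ring
  refine (Finset.sum_le_sum fun u _ => h1 u).trans (le_of_eq ?_)
  rw [← Finset.mul_sum]
  have e3 : ∑ u, ∑ v, wt G u v * (p u + p v) ^ 2 =
      2 * (∑ u, ∑ v, wt G u v * p u ^ 2) + 2 * (∑ u, ∑ v, wt G v u * p v ^ 2) -
      ∑ u, ∑ v, wt G u v * (p u - p v) ^ 2 := by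
    simp only [Finset.mul_sum, ← Finset.sum_add_distrib, ← Finset.sum_sub_distrib]
    refine Finset.sum_congr rfl fun u _ => Finset.sum_congr rfl fun v _ => ?_
    rw [wt_comm G v u]; ring
  have e4 : ∑ u, ∑ v, wt G u v * p u ^ 2 = d * ∑ u, p u ^ 2 := by
    rw [Finset.mul_sum]
    exact Finset.sum_congr rfl fun u _ => by rw [← Finset.sum_mul, wt_sum G d hd]
  rw [e3, Finset.sum_comm (f := fun u v => wt G v u * p v ^ 2), e4]
  field_simp; ring

lemma step_bound {V : Type} [Fintype V] [DecidableEq V] (G : SimpleGraph V) [DecidableRel G.Adj]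
    (d k : ℕ) (hd1 : 1 ≤ d) (hd : G.IsRegularOfDegree d) (φ : ℝ) (hφ : 0 < φ)
    (Cl : Fin k → Finset V) (B : ℝ) (hB : 0 < B)
    (hne : ∀ i, (Cl i).Nonempty)
    (hdis : ∀ i j, i ≠ j → Disjoint (Cl i) (Cl j))
    (hcov : Finset.univ.biUnion Cl = Finset.univ)
    (hsize : ∀ i, B⁻¹ ≤ ((Cl i).card : ℝ))
    (hC : ∀ i, ∀ S ⊆ Cl i, 0 < S.card → (S.card : ℝ) ≤ ((Cl i).card : ℝ) / 2 →
        φ * (d * S.card) ≤ (edgeCount G S (Cl i \ S) : ℝ))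
    (p : V → ℝ) (hp : ∀ u, 0 ≤ p u) (hp1 : ∑ u, p u = 1) :
    ∑ u, (p u / 2 + (1 / (2 * (d:ℝ))) * ∑ v, wt G u v * p v) ^ 2 ≤
      ∑ u, p u ^ 2 - φ ^ 2 / 4 * (∑ u, p u ^ 2 - B) := by
  have hdp : (0:ℝ) < d := by exact_mod_cast hd1
  have split : ∀ F : V → ℝ, ∑ u, F u = ∑ i, ∑ u ∈ Cl i, F u := by
    intro F
    rw [← hcov, Finset.sum_biUnion]
    intro i _ j _ hij
    exact hdis i j hij
  have h1 : ∑ i, ∑ u ∈ Cl i, ∑ v ∈ Cl i, wt G u v * (p u - p v) ^ 2 ≤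
      ∑ u, ∑ v, wt G u v * (p u - p v) ^ 2 := by
    rw [split]
    refine Finset.sum_le_sum fun i _ => Finset.sum_le_sum fun u _ => ?_
    exact Finset.sum_le_sum_of_subset_of_nonneg (Finset.subset_univ _)
      fun v _ _ => mul_nonneg (wt_nonneg G u v) (sq_nonneg _)
  have h2 := Finset.sum_le_sum fun i (_ : i ∈ Finset.univ) =>
    cheeger G d hd φ hφ (Cl i) (hne i) (hC i) p
  rw [← Finset.mul_sum, Finset.sum_sub_distrib, ← split] at h2
  have h3 : ∑ i, (∑ u ∈ Cl i, p u) ^ 2 / ((Cl i).card : ℝ) ≤ B := by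
    have ha : ∀ i, 0 ≤ ∑ u ∈ Cl i, p u := fun i => Finset.sum_nonneg fun u _ => hp u
    have hs : ∑ i, ∑ u ∈ Cl i, p u = 1 := by rw [← split, hp1]
    calc ∑ i, (∑ u ∈ Cl i, p u) ^ 2 / ((Cl i).card : ℝ)
        ≤ ∑ i, B * ∑ u ∈ Cl i, p u := by
          refine Finset.sum_le_sum fun i _ => ?_
          have hle : ∑ u ∈ Cl i, p u ≤ 1 := by
            rw [← hs]
            exact Finset.single_le_sum (f := fun i => ∑ u ∈ Cl i, p u)
              (fun j _ => ha j) (Finset.mem_univ i)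
          have hc : (0:ℝ) < (Cl i).card := by exact_mod_cast (hne i).card_pos
          have hBc : 1 ≤ B * (Cl i).card := by
            have := mul_le_mul_of_nonneg_left (hsize i) hB.le
            rwa [mul_inv_cancel₀ hB.ne'] at this
          rw [div_le_iff₀ hc]
          nlinarith [mul_le_mul_of_nonneg_left hBc (ha i), ha i]
      _ = B := by rw [← Finset.mul_sum, hs, mul_one]
  have h4 := energy G d hd1 hd p
  set Q := ∑ u, p u ^ 2
  set D := ∑ u, ∑ v, wt G u v * (p u - p v) ^ 2
  have h5 : φ ^ 2 * d * (Q - B) ≤ D := by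
    refine le_trans ?_ (h2.trans h1)
    exact mul_le_mul_of_nonneg_left (by linarith) (by positivity)
  have h6 : φ ^ 2 / 4 * (Q - B) ≤ 1 / (4 * d) * D := by
    have := mul_le_mul_of_nonneg_left h5 (by positivity : 0 ≤ 1 / (4 * (d:ℝ)))
    refine le_trans (le_of_eq ?_) this
    field_simp
  linarith

/-- In a `d`-regular graph partitioned into clusters of inner conductance
at least `φ` and size at least `n/(ηk)`, for `t ≥ 10 log n / φ²` the `t`-step distribution of
the lazy random walk `M = (1/2)I + (1/(2d))A` started at any vertex has Euclidean
norm at most `C √(ηk/n)`. -/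
theorem stmt_3 :
    ∃ C : ℝ, 0 < C ∧
    ∀ (V : Type) [Fintype V] [DecidableEq V] (G : SimpleGraph V) [DecidableRel G.Adj]
      (d k n : ℕ) (φ η : ℝ) (Cl : Fin k → Finset V),
      n = Fintype.card V → 2 ≤ n → 1 ≤ d →
      G.IsRegularOfDegree d →
      φ ∈ Set.Ioo (0:ℝ) 1 → 1 ≤ η →
      (∀ i, (Cl i).Nonempty) →
      (∀ i j, i ≠ j → Disjoint (Cl i) (Cl j)) →
      (Finset.univ.biUnion Cl = Finset.univ) →
      (∀ i, (n : ℝ) / (η * k) ≤ ((Cl i).card : ℝ)) →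
      (∀ i, ∀ S ⊆ Cl i, 0 < S.card → (S.card : ℝ) ≤ ((Cl i).card : ℝ) / 2 →
        φ * (d * S.card) ≤ (edgeCount G S (Cl i \ S) : ℝ)) →
      ∀ t : ℕ, 10 * Real.log n / φ ^ 2 ≤ (t : ℝ) →
      ∀ x : V,
        Real.sqrt (∑ y : V,
            (Matrix.mulVec
              (((1/2 : ℝ) • (1 : Matrix V V ℝ) + (1/(2 * (d:ℝ))) • G.adjMatrix ℝ) ^ t)
              (Pi.single x 1) y) ^ 2)
          ≤ C * Real.sqrt (η * k / n) := by
  refine ⟨2, by norm_num, ?_⟩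
  intro V _ _ G _ d k n φ η Cl hn hn2 hd1 hd hφ hη hne hdis hcov hsize hC t ht x
  have hdp : (0:ℝ) < d := by exact_mod_cast hd1
  have hnp : (0:ℝ) < n := by exact_mod_cast (by omega : 0 < n)
  have hk : 1 ≤ k := by
    rcases Nat.eq_zero_or_pos k with h | h
    · subst h
      have : x ∈ Finset.univ.biUnion Cl := by rw [hcov]; exact Finset.mem_univ x
      simp at this
    · exact h
  have hk' : (1:ℝ) ≤ k := by exact_mod_cast hk
  have hηk : 1 ≤ η * k := one_le_mul_of_one_le_of_one_le hη hk'
  set B : ℝ := η * k / n with hBdef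
  have hB : 0 < B := by positivity
  have hBinv : 1 / (n:ℝ) ≤ B := by rw [hBdef]; gcongr
  set M : Matrix V V ℝ := (1/2 : ℝ) • (1 : Matrix V V ℝ) + (1/(2 * (d:ℝ))) • G.adjMatrix ℝ with hM
  have hφ0 : 0 < φ := hφ.1
  have hφ1 : φ < 1 := hφ.2
  have hr : 0 ≤ 1 - φ ^ 2 / 4 := by nlinarith
  have main : ∀ s : ℕ, (∀ y, 0 ≤ Matrix.mulVec (M ^ s) (Pi.single x 1) y) ∧
      (∑ y, Matrix.mulVec (M ^ s) (Pi.single x 1) y = 1) ∧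
      ∑ y, (Matrix.mulVec (M ^ s) (Pi.single x 1) y) ^ 2 - B ≤ (1 - φ ^ 2 / 4) ^ s := by
    intro s
    induction s with
    | zero =>
      refine ⟨?_, ?_, ?_⟩
      · intro y
        rw [pow_zero, Matrix.one_mulVec, Pi.single_apply]
        split_ifs <;> norm_num
      · rw [pow_zero, Matrix.one_mulVec]
        simp [Pi.single_apply]
      · rw [pow_zero, Matrix.one_mulVec]
        simp [Pi.single_apply]
        exact hB.le
    | succ s ih =>
      obtain ⟨i1, i2, i3⟩ := ih
      have e : ∀ y, Matrix.mulVec (M ^ (s+1)) (Pi.single x 1) y =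
          Matrix.mulVec (M ^ s) (Pi.single x 1) y / 2 +
          (1 / (2 * (d:ℝ))) * ∑ v, wt G y v * Matrix.mulVec (M ^ s) (Pi.single x 1) v := by
        intro y
        rw [pow_succ', ← Matrix.mulVec_mulVec, hM, mulVec_formula]
      simp only [e]
      generalize Matrix.mulVec (M ^ s) (Pi.single x 1) = p at i1 i2 i3 ⊢
      refine ⟨?_, ?_, ?_⟩
      · intro y
        have h1 : 0 ≤ ∑ v, wt G y v * p v :=
          Finset.sum_nonneg fun v _ => mul_nonneg (wt_nonneg G y v) (i1 v)
        have := i1 y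
        positivity
      · rw [Finset.sum_add_distrib, ← Finset.mul_sum, Finset.sum_comm, ← Finset.sum_div, i2]
        have : ∀ v, ∑ u, wt G u v * p v = d * p v := by
          intro v
          rw [← Finset.sum_mul, ← wt_sum G d hd v]
          simp only [wt_comm G _ v]
        simp only [this]
        rw [← Finset.mul_sum, i2]
        field_simp
        norm_num
      · have hs := step_bound G d k hd1 hd φ hφ0 Cl B hB hne hdis hcov
          (fun i => by rw [hBdef, inv_div]; exact hsize i) hC p i1 i2
        have := mul_le_mul_of_nonneg_left i3 hr
        rw [pow_succ']
        linarith
  have hdec : (1 - φ ^ 2 / 4) ^ t ≤ 1 / (n:ℝ) := by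
    have hlog : 0 ≤ Real.log n := Real.log_nonneg (by exact_mod_cast (by omega : 1 ≤ n))
    have h1 : 1 - φ ^ 2 / 4 ≤ Real.exp (-(φ ^ 2 / 4)) := by
      have := Real.add_one_le_exp (-(φ ^ 2 / 4)); linarith
    refine (pow_le_pow_left₀ hr h1 t).trans ?_
    rw [← Real.exp_nat_mul, one_div, ← Real.exp_log (inv_pos.2 hnp), Real.log_inv]
    apply Real.exp_le_exp.2
    rw [div_le_iff₀ (by positivity)] at ht
    nlinarith
  have hfin := (main t).2.2
  have : ∑ y, (Matrix.mulVec (M ^ t) (Pi.single x 1) y) ^ 2 ≤ 2 ^ 2 * B := by linarith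
  calc _ ≤ Real.sqrt (2 ^ 2 * B) := Real.sqrt_le_sqrt this
    _ = 2 * Real.sqrt B := by
      rw [Real.sqrt_mul (by norm_num), Real.sqrt_sq (by norm_num)]
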